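/- arXiv:2005.13748 — 3 statements merged into one kernel-verified Lean document; each statement's English description precedes it below -/
import Mathlib

section
/- Let γ ∈ (0, 1). If φ : ℝ → ℝ is a convex margin-based loss with φ(α) ≥ 0 for all α, then φ is not (φ_γ, [−1, 1])-calibrated, and φ is not (φ_γ, ℝ)-calibrated. -/
/-- Class-conditional risk of a margin-based loss `φ`:
`C_φ(α, η) = η φ(α) + (1 - η) φ(-α)`. -/
noncomputable def ccr (φ : ℝ → ℝ) (α η : ℝ) : ℝ := η * φ α + (1 - η) * φ (-α)

/-- Minimal class-conditional risk over a set `A` of achievable prediction values. -/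
noncomputable def ccrStar (φ : ℝ → ℝ) (A : Set ℝ) (η : ℝ) : ℝ :=
  sInf ((fun α => ccr φ α η) '' A)

/-- Excess class-conditional risk. -/
noncomputable def ccrExcess (φ : ℝ → ℝ) (A : Set ℝ) (α η : ℝ) : ℝ :=
  ccr φ α η - ccrStar φ A η

/-- `φ` is `(ψ, A)`-calibrated. -/
def Calibrated (φ ψ : ℝ → ℝ) (A : Set ℝ) : Prop :=
  ∀ ε > (0:ℝ), ∃ δ > (0:ℝ), ∀ η ∈ Set.Icc (0:ℝ) 1, ∀ α ∈ A,
    ccr φ α η < ccrStar φ A η + δ → ccr ψ α η < ccrStar ψ A η + ε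

/-- The `γ`-robust 0-1 loss `φ_γ(α) = 1{α ≤ γ}` (the 0-1 loss is the case `γ = 0`). -/
noncomputable def robustLoss (γ : ℝ) (α : ℝ) : ℝ := if α ≤ γ then 1 else 0

/-- Quasiconcavity of a real function on ℝ. -/
def QuasiconcaveFn (h : ℝ → ℝ) : Prop :=
  ∀ α₁ α₂ l : ℝ, 0 ≤ l → l ≤ 1 → min (h α₁) (h α₂) ≤ h (l * α₁ + (1 - l) * α₂)

/-- `φ` is quasiconcave even if its even part `α ↦ φ(α) + φ(-α)` is quasiconcave. -/
def QuasiconcaveEven (φ : ℝ → ℝ) : Prop := QuasiconcaveFn (fun α => φ α + φ (-α))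

theorem ConvexOn.ccr_zero_le_ccrStar_half {φ : ℝ → ℝ} (hconv : ConvexOn ℝ Set.univ φ)
    {A : Set ℝ} (hA : A.Nonempty) : ccr φ 0 (1 / 2) ≤ ccrStar φ A (1 / 2) := by
  refine le_csInf (hA.image _) ?_
  rintro _ ⟨α, -, rfl⟩
  have h := hconv.2 (Set.mem_univ α) (Set.mem_univ (-α))
    (by norm_num : (0 : ℝ) ≤ 1 / 2) (by norm_num : (0 : ℝ) ≤ 1 / 2) (by norm_num)
  have h0 : (1 / 2 : ℝ) • α + (1 / 2 : ℝ) • (-α) = 0 := by simp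
  rw [h0] at h
  simp only [smul_eq_mul] at h
  simp only [ccr, neg_zero]
  linarith

theorem robustLoss_nonneg (γ α : ℝ) : 0 ≤ robustLoss γ α := by
  unfold robustLoss
  split_ifs <;> norm_num

theorem ccrStar_robustLoss_half_le {γ : ℝ} (hγ : γ ∈ Set.Ioo (0 : ℝ) 1) {A : Set ℝ}
    (h1 : (1 : ℝ) ∈ A) : ccrStar (robustLoss γ) A (1 / 2) ≤ 1 / 2 := by
  have hbdd : BddBelow ((fun α => ccr (robustLoss γ) α (1 / 2)) '' A) := by
    refine ⟨0, ?_⟩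
    rintro _ ⟨α, -, rfl⟩
    have := robustLoss_nonneg γ α
    have := robustLoss_nonneg γ (-α)
    simp only [ccr]
    linarith
  refine (csInf_le hbdd ⟨1, h1, rfl⟩).trans ?_
  have hpos : ¬ (1 : ℝ) ≤ γ := not_le.mpr hγ.2
  have hneg : (-1 : ℝ) ≤ γ := by linarith [hγ.1]
  simp only [ccr, robustLoss, if_neg hpos, if_pos hneg]
  norm_num

/-- At `η = 1/2` the prediction `0` minimizes every convex conditional risk, while its robust
risk exceeds the minimum by at least `1/2`. -/
theorem ConvexOn.not_calibrated_robustLoss {γ : ℝ} (hγ : γ ∈ Set.Ioo (0 : ℝ) 1) {φ : ℝ → ℝ}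
    (hconv : ConvexOn ℝ Set.univ φ) {A : Set ℝ} (h0 : (0 : ℝ) ∈ A) (h1 : (1 : ℝ) ∈ A) :
    ¬ Calibrated φ (robustLoss γ) A := by
  intro hcal
  obtain ⟨δ, hδ, h⟩ := hcal (1 / 2) (by norm_num)
  have hlt := h (1 / 2) ⟨by norm_num, by norm_num⟩ 0 h0
    (by linarith [hconv.ccr_zero_le_ccrStar_half ⟨0, h0⟩])
  have hzero : ccr (robustLoss γ) 0 (1 / 2) = 1 := by
    simp only [ccr, robustLoss, neg_zero, if_pos hγ.1.le]
    norm_num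
  linarith [ccrStar_robustLoss_half_le hγ h1]

/-- Corollary 1: no convex margin-based surrogate loss is calibrated wrt
`(φ_γ, [-1,1])` (linear models) nor wrt `(φ_γ, ℝ)` (all measurable functions). -/
theorem no_convex_calibrated_surrogate_lin_all
    (γ : ℝ) (hγ : γ ∈ Set.Ioo (0:ℝ) 1)
    (φ : ℝ → ℝ) (hφ : ∀ α, 0 ≤ φ α) (hconv : ConvexOn ℝ Set.univ φ) :
    ¬ Calibrated φ (robustLoss γ) (Set.Icc (-1:ℝ) 1) ∧
    ¬ Calibrated φ (robustLoss γ) Set.univ := by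
  exact ⟨hconv.not_calibrated_robustLoss hγ (by norm_num) (by norm_num),
    hconv.not_calibrated_robustLoss hγ (Set.mem_univ _) (Set.mem_univ _)⟩
end

section
/- Let 0 < γ < 1/4 and −1 + 1/√2 < β < 0. Define the modified squared loss φ(α) := 1 for α ≤ 0, φ(α) := (1 − α)² for 0 < α ≤ 1, and φ(α) := 0 for α > 1, and its shift φ_β(α) := φ(α − β). Then φ_β is (φ_γ, [−1, 1])-calibrated, even though φ_β is not quasiconcave even. -/
/-- The modified squared loss: `1` for `α ≤ 0`, `(1-α)²` for `0 < α ≤ 1`, `0` for `α > 1`. -/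
noncomputable def modSq (α : ℝ) : ℝ := if α ≤ 0 then 1 else if α ≤ 1 then (1 - α)^2 else 0

lemma modSq_nonneg (x : ℝ) : 0 ≤ modSq x := by
  unfold modSq
  split_ifs <;> positivity

lemma modSq_le_one (x : ℝ) : modSq x ≤ 1 := by
  unfold modSq
  split_ifs <;> nlinarith

lemma modSq_of_le_zero {x : ℝ} (hx : x ≤ 0) : modSq x = 1 := if_pos hx

lemma modSq_of_mem_Icc {x : ℝ} (h0 : 0 ≤ x) (h1 : x ≤ 1) : modSq x = (1 - x) ^ 2 := by
  unfold modSq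
  split_ifs with h
  · obtain rfl : x = 0 := le_antisymm h h0
    norm_num
  · rfl

lemma modSq_of_one_le {x : ℝ} (hx : 1 ≤ x) : modSq x = 0 := by
  rcases hx.eq_or_lt with rfl | h
  · norm_num [modSq]
  · simp [modSq, not_le.2 h, not_le.2 (one_pos.trans h)]

lemma modSq_antitone : Antitone modSq := by
  intro x y hxy
  unfold modSq
  split_ifs <;> nlinarith

lemma sq_le_modSq {x t : ℝ} (ht : t ≤ 1) (ht0 : 0 ≤ t) (hx : x ≤ t) : (1 - t) ^ 2 ≤ modSq x := by
  unfold modSq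
  split_ifs <;> nlinarith

/-- The even part of the shifted loss is at least `1`. -/
lemma one_le_modSq_add_modSq_neg {β : ℝ} (hβ : 1 / 2 < (1 + β) ^ 2) (hβ' : -1 / 2 < β)
    (α : ℝ) : 1 ≤ modSq (α - β) + modSq (-α - β) := by
  rcases le_total α β with h | h
  · rw [modSq_of_le_zero (x := α - β) (by linarith)]
    linarith [modSq_nonneg (-α - β)]
  rcases le_total (-α) β with h' | h'
  · rw [modSq_of_le_zero (x := -α - β) (by linarith)]
    linarith [modSq_nonneg (α - β)]
  rw [modSq_of_mem_Icc (by linarith) (by linarith), modSq_of_mem_Icc (by linarith) (by linarith)]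
  nlinarith [sq_nonneg α]

/-- Near the origin the even part of the shifted loss is bounded away from `1`. -/
lemma one_add_min_le_modSq_add_modSq_neg {β γ : ℝ} (hβ' : -1 / 2 < β) (hβ1 : β < 0)
    (hγ1 : γ - β ≤ 1) {α : ℝ} (hα : |α| ≤ γ) :
    1 + min (2 * (1 + β) ^ 2 - 1) ((1 + β - γ) ^ 2) ≤ modSq (α - β) + modSq (-α - β) := by
  obtain ⟨h1, h2⟩ := abs_le.1 hα
  have hp := sq_le_modSq (x := α - β) hγ1 (by linarith) (by linarith)
  have hq := sq_le_modSq (x := -α - β) hγ1 (by linarith) (by linarith)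
  have hm1 := min_le_left (2 * (1 + β) ^ 2 - 1) ((1 + β - γ) ^ 2)
  have hm2 := min_le_right (2 * (1 + β) ^ 2 - 1) ((1 + β - γ) ^ 2)
  rcases le_total α β with h | h
  · rw [modSq_of_le_zero (x := α - β) (by linarith)]
    nlinarith
  rcases le_total (-α) β with h' | h'
  · rw [modSq_of_le_zero (x := -α - β) (by linarith)]
    nlinarith
  rw [modSq_of_mem_Icc (by linarith) (by linarith), modSq_of_mem_Icc (by linarith) (by linarith)]
  nlinarith [sq_nonneg α]

lemma ccrStar_le_ccr {φ : ℝ → ℝ} (hφ : ∀ x, 0 ≤ φ x) {A : Set ℝ} {α η : ℝ} (hα : α ∈ A)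
    (hη : η ∈ Set.Icc (0 : ℝ) 1) : ccrStar φ A η ≤ ccr φ α η := by
  refine csInf_le ⟨0, ?_⟩ ⟨α, hα, rfl⟩
  rintro _ ⟨x, -, rfl⟩
  exact add_nonneg (mul_nonneg hη.1 (hφ _)) (mul_nonneg (sub_nonneg.2 hη.2) (hφ _))

lemma min_le_ccr_robustLoss {γ : ℝ} (hγ : 0 < γ) {η : ℝ} (hη : η ∈ Set.Icc (0 : ℝ) 1) (α : ℝ) :
    min η (1 - η) ≤ ccr (robustLoss γ) α η := by
  obtain ⟨h0, h1⟩ := hη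
  have hm1 := min_le_left η (1 - η)
  have hm2 := min_le_right η (1 - η)
  unfold ccr robustLoss
  split_ifs <;> linarith

lemma min_le_ccrStar_robustLoss {γ : ℝ} (hγ : 0 < γ) {A : Set ℝ} (hA : A.Nonempty) {η : ℝ}
    (hη : η ∈ Set.Icc (0 : ℝ) 1) : min η (1 - η) ≤ ccrStar (robustLoss γ) A η := by
  refine le_csInf (hA.image _) ?_
  rintro _ ⟨x, -, rfl⟩
  exact min_le_ccr_robustLoss hγ hη x

/-- A shifted modified squared loss is calibrated for the robust loss as soon as its even part
at the origin exceeds `1`. -/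
lemma calibrated_modSq_shift {β γ : ℝ} (hγ0 : 0 < γ) (hβ : 1 / 2 < (1 + β) ^ 2)
    (hβ' : -1 / 2 < β) (hβ1 : β < 0) (hγ1 : γ - β < 1) :
    Calibrated (fun α => modSq (α - β)) (robustLoss γ) (Set.Icc (-1 : ℝ) 1) := by
  intro ε hε
  set m := min (2 * (1 + β) ^ 2 - 1) ((1 + β - γ) ^ 2) with hm
  have hm0 : 0 < m := lt_min (by linarith) (pow_pos (by linarith) 2)
  refine ⟨min (m / 2) (ε / 2), by positivity, fun η hη α hα hlt => ?_⟩
  have hφ : ∀ x, 0 ≤ (fun α => modSq (α - β)) x := fun x => modSq_nonneg _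
  have hs1 := ccrStar_le_ccr hφ (α := 1) (A := Set.Icc (-1 : ℝ) 1) (by norm_num) hη
  have hs2 := ccrStar_le_ccr hφ (α := -1) (A := Set.Icc (-1 : ℝ) 1) (by norm_num) hη
  have hψ := min_le_ccrStar_robustLoss hγ0 (A := Set.Icc (-1 : ℝ) 1) ⟨α, hα⟩ hη
  have hδ1 := min_le_left (m / 2) (ε / 2)
  have hδ2 := min_le_right (m / 2) (ε / 2)
  obtain ⟨h0, h1⟩ := hη
  have e1 : modSq (1 - β) = 0 := modSq_of_one_le (by linarith)
  have e2 : modSq (-1 - β) = 1 := modSq_of_le_zero (by linarith)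
  simp only [ccr, neg_neg, e1, e2] at hs1 hs2
  simp only [ccr] at hlt
  have hsum := one_le_modSq_add_modSq_neg hβ hβ' α
  have hp0 := modSq_nonneg (α - β)
  have hq0 := modSq_nonneg (-α - β)
  have hp1 := modSq_le_one (α - β)
  have hq1 := modSq_le_one (-α - β)
  by_cases hαγ : |α| ≤ γ
  · exfalso
    have hnear := one_add_min_le_modSq_add_modSq_neg hβ' hβ1 hγ1.le hαγ
    obtain ⟨h1', h2'⟩ := abs_le.1 hαγ
    have hp := sq_le_modSq (x := α - β) hγ1.le (by linarith) (by linarith)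
    have hq := sq_le_modSq (x := -α - β) hγ1.le (by linarith) (by linarith)
    rw [← hm] at hnear
    have hm2 : m ≤ (1 - (γ - β)) ^ 2 := by
      rw [show 1 - (γ - β) = 1 + β - γ by ring]
      exact min_le_right _ _
    rcases le_total η (1 / 2) with h | h <;> nlinarith
  have key : ccr (robustLoss γ) α η < min η (1 - η) + ε := by
    rw [← min_add_add_right, lt_min_iff]
    rcases lt_abs.1 (not_le.1 hαγ) with h | h
    · have hle : modSq (α - β) ≤ modSq (-α - β) := modSq_antitone (by linarith)
      simp only [ccr, robustLoss, if_neg (not_le.2 h), if_pos (show -α ≤ γ by linarith)]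
      refine ⟨?_, by linarith⟩
      by_contra! hcon
      nlinarith
    · have hle : modSq (-α - β) ≤ modSq (α - β) := modSq_antitone (by linarith)
      simp only [ccr, robustLoss, if_neg (not_le.2 h), if_pos (show α ≤ γ by linarith)]
      refine ⟨by linarith, ?_⟩
      by_contra! hcon
      nlinarith
  linarith

lemma not_quasiconcaveEven_modSq_shift {β : ℝ} (hβ' : -1 / 2 < β) (hβ1 : β < 0) :
    ¬ QuasiconcaveEven (fun α => modSq (α - β)) := by
  intro h
  have h' := h β (-β) (1 / 2) (by norm_num) (by norm_num)
  rw [show (1 / 2 : ℝ) * β + (1 - 1 / 2) * (-β) = 0 by ring] at h'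
  have e0 : modSq (0 - β) = (1 + β) ^ 2 := by
    rw [modSq_of_mem_Icc (by linarith) (by linarith)]; ring
  have e1 : modSq (β - β) = 1 := modSq_of_le_zero (by linarith)
  have e2 : modSq (-β - β) = (1 + 2 * β) ^ 2 := by
    rw [modSq_of_mem_Icc (by linarith) (by linarith)]; ring
  simp only [neg_neg, neg_zero, e0, e1, e2, add_comm, min_self] at h'
  nlinarith

/-- For `0 < γ < 1/4` and `-1 + 1/√2 < β < 0`, the shifted modified squared loss is
`(φ_γ, [-1,1])`-calibrated even though it is not quasiconcave even. -/
theorem modSq_negative_shift_calibrated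
    (γ : ℝ) (hγ0 : 0 < γ) (hγ1 : γ < 1/4)
    (β : ℝ) (hβ0 : -1 + 1 / Real.sqrt 2 < β) (hβ1 : β < 0) :
    Calibrated (fun α => modSq (α - β)) (robustLoss γ) (Set.Icc (-1:ℝ) 1) ∧
    ¬ QuasiconcaveEven (fun α => modSq (α - β)) := by
  have hs : 0 < 1 / Real.sqrt 2 := by positivity
  have hsq : (1 / Real.sqrt 2) ^ 2 = 1 / 2 := by
    rw [div_pow, Real.sq_sqrt (by norm_num), one_pow]
  have hβ : 1 / 2 < (1 + β) ^ 2 := by nlinarith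
  have hβ2 : -(3 / 10) < β := by nlinarith
  exact ⟨calibrated_modSq_shift hγ0 hβ (by linarith) hβ1 (by linarith),
    not_quasiconcaveEven_modSq_shift (by linarith) hβ1⟩
end

section
/- Let γ ∈ (0, 1) and β ≥ 0, define the shifted hinge loss φ_β(α) := max{0, 1 − α + β}, and set A := [−1, 1]. For 0 < ε ≤ 1, define the calibration function value D(ε) := inf{ ΔC_{φ_β,A}(α, η) : η ∈ [0, 1], α ∈ A, ΔC_{φ_γ,A}(α, η) ≥ ε }. Then D(ε) = 0 for every ε with 0 < ε ≤ 1/2, and D(ε) = (1 − γ)(2ε − 1) for every ε with 1/2 < ε ≤ 1. In particular, φ_β is not (φ_γ, [−1, 1])-calibrated. -/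
theorem mul_le_abs_of_mem_Icc {α : ℝ} (hα : α ∈ Set.Icc (-1:ℝ) 1) (t : ℝ) : t * α ≤ |t| := by
  refine (le_abs_self _).trans ?_
  rw [abs_mul]
  exact mul_le_of_le_one_right (abs_nonneg _) (abs_le.2 hα)

/-- On `[-1, 1]` the class-conditional risk of the shifted hinge loss is affine in `α`. -/
theorem ccr_shiftedHinge {β α : ℝ} (hβ : 0 ≤ β) (hα : α ∈ Set.Icc (-1:ℝ) 1) (η : ℝ) :
    ccr (fun a => max 0 (1 - a + β)) α η = 1 + β - (2 * η - 1) * α := by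
  obtain ⟨h₁, h₂⟩ := hα
  simp only [ccr]
  rw [max_eq_right (by linarith), max_eq_right (by linarith)]
  ring

theorem ccrStar_shiftedHinge {β : ℝ} (hβ : 0 ≤ β) (η : ℝ) :
    ccrStar (fun a => max 0 (1 - a + β)) (Set.Icc (-1:ℝ) 1) η = 1 + β - |2 * η - 1| := by
  refine IsLeast.csInf_eq ⟨?_, ?_⟩
  · rcases le_total 0 (2 * η - 1) with h | h
    · refine ⟨1, by simp, ?_⟩
      dsimp only
      rw [ccr_shiftedHinge hβ (by simp), abs_of_nonneg h, mul_one]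
    · refine ⟨-1, by simp, ?_⟩
      dsimp only
      rw [ccr_shiftedHinge hβ (by simp), abs_of_nonpos h, mul_neg_one]
  · rintro _ ⟨α, hα, rfl⟩
    dsimp only
    rw [ccr_shiftedHinge hβ hα]
    linarith [mul_le_abs_of_mem_Icc hα (2 * η - 1)]

theorem ccrExcess_shiftedHinge {β α : ℝ} (hβ : 0 ≤ β) (hα : α ∈ Set.Icc (-1:ℝ) 1) (η : ℝ) :
    ccrExcess (fun a => max 0 (1 - a + β)) (Set.Icc (-1:ℝ) 1) α η =
      |2 * η - 1| - (2 * η - 1) * α := by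
  rw [ccrExcess, ccr_shiftedHinge hβ hα, ccrStar_shiftedHinge hβ]
  ring

theorem ccr_robustLoss_of_abs_le {γ α : ℝ} (hα : |α| ≤ γ) (η : ℝ) :
    ccr (robustLoss γ) α η = 1 := by
  obtain ⟨h₁, h₂⟩ := abs_le.1 hα
  rw [ccr, robustLoss, robustLoss, if_pos h₂, if_pos (by linarith)]
  ring

theorem ccr_robustLoss_of_lt {γ α : ℝ} (hγ : 0 < γ) (hα : γ < α) (η : ℝ) :
    ccr (robustLoss γ) α η = 1 - η := by
  rw [ccr, robustLoss, robustLoss, if_neg (by linarith), if_pos (by linarith)]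
  ring

theorem ccr_robustLoss_of_lt_neg {γ α : ℝ} (hγ : 0 < γ) (hα : α < -γ) (η : ℝ) :
    ccr (robustLoss γ) α η = η := by
  rw [ccr, robustLoss, robustLoss, if_pos (by linarith), if_neg (by linarith)]
  ring

theorem ccrStar_robustLoss {γ η : ℝ} (hγ : γ ∈ Set.Ioo (0:ℝ) 1) (hη : η ∈ Set.Icc (0:ℝ) 1) :
    ccrStar (robustLoss γ) (Set.Icc (-1:ℝ) 1) η = min η (1 - η) := by
  obtain ⟨hγ₀, hγ₁⟩ := hγ
  obtain ⟨hη₀, hη₁⟩ := hη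
  refine IsLeast.csInf_eq ⟨?_, ?_⟩
  · rcases min_choice η (1 - η) with h | h
    · exact ⟨-1, by simp, by rw [h]; exact ccr_robustLoss_of_lt_neg hγ₀ (by linarith) η⟩
    · exact ⟨1, by simp, by rw [h]; exact ccr_robustLoss_of_lt hγ₀ hγ₁ η⟩
  · rintro _ ⟨α, -, rfl⟩
    dsimp only
    rcases lt_or_ge γ α with h₁ | h₁
    · rw [ccr_robustLoss_of_lt hγ₀ h₁]
      exact min_le_right _ _
    rcases lt_or_ge α (-γ) with h₂ | h₂
    · rw [ccr_robustLoss_of_lt_neg hγ₀ h₂]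
      exact min_le_left _ _
    · rw [ccr_robustLoss_of_abs_le (abs_le.2 ⟨h₂, h₁⟩)]
      exact (min_le_left _ _).trans hη₁

/-- Lower bound on the excess risk of the hinge loss at points of large robust excess risk. -/
theorem le_hinge_excess_of_le_robust_excess {γ α η ε : ℝ} (hγ : γ ∈ Set.Ioo (0:ℝ) 1)
    (hη : η ∈ Set.Icc (0:ℝ) 1) (hε : 1 / 2 < ε) (hε' : ε ≤ 1)
    (h : ε ≤ ccrExcess (robustLoss γ) (Set.Icc (-1:ℝ) 1) α η) :
    (1 - γ) * (2 * ε - 1) ≤ |2 * η - 1| - (2 * η - 1) * α := by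
  rw [ccrExcess, ccrStar_robustLoss hγ hη] at h
  obtain ⟨hγ₀, hγ₁⟩ := hγ
  rcases lt_or_ge γ α with h₁ | h₁
  · rw [ccr_robustLoss_of_lt hγ₀ h₁] at h
    rcases le_total η (1 - η) with hm | hm
    · rw [min_eq_left hm] at h
      rw [abs_of_nonpos (by linarith)]
      nlinarith
    · rw [min_eq_right hm] at h
      linarith
  rcases lt_or_ge α (-γ) with h₂ | h₂
  · rw [ccr_robustLoss_of_lt_neg hγ₀ h₂] at h
    rcases le_total η (1 - η) with hm | hm
    · rw [min_eq_left hm] at h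
      linarith
    · rw [min_eq_right hm] at h
      rw [abs_of_nonneg (by linarith)]
      nlinarith
  · rw [ccr_robustLoss_of_abs_le (abs_le.2 ⟨h₂, h₁⟩)] at h
    rcases le_total η (1 - η) with hm | hm
    · rw [min_eq_left hm] at h
      rw [abs_of_nonpos (by linarith)]
      nlinarith
    · rw [min_eq_right hm] at h
      rw [abs_of_nonneg (by linarith)]
      nlinarith

/-- The `(φ_γ, [-1,1])`-calibration function of the shifted hinge loss
`φ_β(α) = max{0, 1 - α + β}` equals `0` on `(0, 1/2]` and `(1-γ)(2ε-1)` on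
`(1/2, 1]`; in particular the shifted hinge loss is not `(φ_γ, [-1,1])`-calibrated. -/
theorem hinge_calibration_function
    (γ : ℝ) (hγ : γ ∈ Set.Ioo (0:ℝ) 1) (β : ℝ) (hβ : 0 ≤ β) :
    (∀ ε : ℝ, 0 < ε → ε ≤ 1/2 →
      sInf {x : ℝ | ∃ η ∈ Set.Icc (0:ℝ) 1, ∃ α ∈ Set.Icc (-1:ℝ) 1,
          ccrExcess (robustLoss γ) (Set.Icc (-1:ℝ) 1) α η ≥ ε ∧
          x = ccrExcess (fun a => max 0 (1 - a + β)) (Set.Icc (-1:ℝ) 1) α η}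
        = 0) ∧
    (∀ ε : ℝ, 1/2 < ε → ε ≤ 1 →
      sInf {x : ℝ | ∃ η ∈ Set.Icc (0:ℝ) 1, ∃ α ∈ Set.Icc (-1:ℝ) 1,
          ccrExcess (robustLoss γ) (Set.Icc (-1:ℝ) 1) α η ≥ ε ∧
          x = ccrExcess (fun a => max 0 (1 - a + β)) (Set.Icc (-1:ℝ) 1) α η}
        = (1 - γ) * (2 * ε - 1)) ∧
    ¬ Calibrated (fun a => max 0 (1 - a + β)) (robustLoss γ) (Set.Icc (-1:ℝ) 1) := by
  have hγ₀ := hγ.1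
  have hγ₁ := hγ.2
  have half_mem : (1 / 2 : ℝ) ∈ Set.Icc (0:ℝ) 1 := by norm_num
  have zero_mem : (0:ℝ) ∈ Set.Icc (-1:ℝ) 1 := by norm_num
  have robust_star_half : ccrStar (robustLoss γ) (Set.Icc (-1:ℝ) 1) (1 / 2) = 1 / 2 := by
    rw [ccrStar_robustLoss hγ half_mem]
    norm_num
  have robust_zero_half : ccr (robustLoss γ) 0 (1 / 2) = 1 :=
    ccr_robustLoss_of_abs_le (by simpa using hγ₀.le) _
  refine ⟨fun ε _ hε => IsLeast.csInf_eq ⟨?_, ?_⟩, fun ε hε hε' => IsLeast.csInf_eq ⟨?_, ?_⟩, ?_⟩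
  · refine ⟨1 / 2, half_mem, 0, zero_mem, ?_, ?_⟩
    · rw [ccrExcess, robust_star_half, robust_zero_half]
      linarith
    · rw [ccrExcess_shiftedHinge hβ zero_mem]
      norm_num
  · rintro _ ⟨η, -, α, hα, -, rfl⟩
    rw [ccrExcess_shiftedHinge hβ hα]
    linarith [mul_le_abs_of_mem_Icc hα (2 * η - 1)]
  · have hε_mem : ε ∈ Set.Icc (0:ℝ) 1 := ⟨by linarith, hε'⟩
    have hγ_mem : γ ∈ Set.Icc (-1:ℝ) 1 := ⟨by linarith, hγ₁.le⟩
    refine ⟨ε, hε_mem, γ, hγ_mem, ?_, ?_⟩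
    · rw [ccrExcess, ccrStar_robustLoss hγ hε_mem,
        ccr_robustLoss_of_abs_le (abs_of_pos hγ₀).le, min_eq_right (by linarith)]
      linarith
    · rw [ccrExcess_shiftedHinge hβ hγ_mem, abs_of_nonneg (by linarith)]
      ring
  · rintro _ ⟨η, hη, α, hα, h, rfl⟩
    rw [ccrExcess_shiftedHinge hβ hα]
    exact le_hinge_excess_of_le_robust_excess hγ hη hε hε' h
  · intro hcal
    obtain ⟨δ, hδ, h⟩ := hcal (1 / 2) (by norm_num)
    have hlt := h (1 / 2) half_mem 0 zero_mem (by
      rw [ccr_shiftedHinge hβ zero_mem, ccrStar_shiftedHinge hβ]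
      norm_num
      exact hδ)
    rw [robust_zero_half, robust_star_half] at hlt
    norm_num at hlt
end
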